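/- arXiv:2403.04271 — 2 statements merged into one kernel-verified Lean document; each statement's English description precedes it below -/
import Mathlib

section
/- Let ℬ be an abelian category and let S : 0 → A → B → C → 0 be a short exact sequence. Let A' and C' be objects of ℬ each of which is a subquotient of a finite biproduct of copies of B. Suppose S' : 0 → A' → B' → C' → 0 is a short exact sequence whose extension class satisfies extClass(S') = Σ_{i=1}^{k} (ψ_i)^*((φ_i)_*(extClass(S))) in Ext¹(C', A') for some morphisms φ₁, …, φ_k : A → A' and ψ₁, …, ψ_k : C' → C. Then the middle object B' is itself a subquotient of a finite biproduct of copies of B. -/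
universe w v u

open CategoryTheory CategoryTheory.Limits CategoryTheory.Abelian

attribute [local instance] CategoryTheory.Abelian.hasFiniteBiproducts

/-- `Y` is a subquotient of a finite biproduct of copies of `X`: there are `n : ℕ`, an
object `D`, a monomorphism `D ⟶ X^{⊕n}` and an epimorphism `D ⟶ Y`. -/
def IsSubquotientOfFinitePower {ℬ : Type*} [Category ℬ] [Abelian ℬ] (Y X : ℬ) : Prop :=
  ∃ (n : ℕ) (D : ℬ) (m : D ⟶ ⨁ (fun _ : Fin n => X)), Mono m ∧ ∃ e : D ⟶ Y, Epi e

namespace SubqAux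

variable {ℬ : Type u} [Category.{v} ℬ] [Abelian ℬ]

lemma of_epi {X Y B : ℬ} (h : IsSubquotientOfFinitePower X B) (f : X ⟶ Y) [Epi f] :
    IsSubquotientOfFinitePower Y B := by
  obtain ⟨n, D, m, hm, e, he⟩ := h
  exact ⟨n, D, m, hm, e ≫ f, epi_comp e f⟩

lemma of_mono {X Y B : ℬ} (h : IsSubquotientOfFinitePower X B) (f : Y ⟶ X) [Mono f] :
    IsSubquotientOfFinitePower Y B := by
  obtain ⟨n, D, m, hm, e, he⟩ := h
  exact ⟨n, pullback e f, pullback.fst e f ≫ m, mono_comp _ _, pullback.snd e f, inferInstance⟩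

lemma self (B : ℬ) : IsSubquotientOfFinitePower B B :=
  ⟨1, B, biproduct.lift (fun _ => 𝟙 B),
    ⟨fun u v huv => by simpa using huv =≫ biproduct.π _ 0⟩, 𝟙 B, inferInstance⟩

lemma biprod {X Y B : ℬ} (hX : IsSubquotientOfFinitePower X B)
    (hY : IsSubquotientOfFinitePower Y B) : IsSubquotientOfFinitePower (X ⊞ Y) B := by
  obtain ⟨n, D, m, hm, e, he⟩ := hX
  obtain ⟨n', D', m', hm', e', he'⟩ := hY
  refine ⟨n + n', D ⊞ D', biproduct.lift (fun i => Fin.addCases (motive := fun _ => (D ⊞ D' ⟶ B))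
    (fun i => biprod.fst ≫ m ≫ biproduct.π _ i)
    (fun i => biprod.snd ≫ m' ≫ biproduct.π _ i) i), ⟨fun u v huv => ?_⟩,
    biprod.map e e', inferInstance⟩
  apply biprod.hom_ext
  · rw [← cancel_mono m]
    apply biproduct.hom_ext
    intro i
    simpa using huv =≫ biproduct.π _ (Fin.castAdd n' i)
  · rw [← cancel_mono m']
    apply biproduct.hom_ext
    intro i
    simpa using huv =≫ biproduct.π _ (Fin.natAdd n i)

lemma exists_cover {B C C' : ℬ} (g : B ⟶ C) [Epi g] (hC' : IsSubquotientOfFinitePower C' B)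
    (k : ℕ) (ψ : Fin k → (C' ⟶ C)) :
    ∃ (P : ℬ) (p : P ⟶ C'), Epi p ∧ IsSubquotientOfFinitePower P B ∧
      ∀ i, ∃ q : P ⟶ B, p ≫ ψ i = q ≫ g := by
  induction k with
  | zero => exact ⟨C', 𝟙 _, inferInstance, hC', fun i => i.elim0⟩
  | succ k ih =>
    obtain ⟨P, p, hp, hP, h⟩ := ih (fun i => ψ i.castSucc)
    let f := p ≫ ψ (Fin.last k)
    have : Mono (biprod.lift (pullback.fst f g) (pullback.snd f g)) := ⟨fun u v huv => by
      apply pullback.hom_ext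
      · simpa using huv =≫ biprod.fst
      · simpa using huv =≫ biprod.snd⟩
    refine ⟨pullback f g, pullback.fst f g ≫ p, epi_comp _ _,
      of_mono (biprod hP (self B)) (biprod.lift (pullback.fst f g) (pullback.snd f g)), ?_⟩
    intro i
    induction i using Fin.lastCases with
    | last => exact ⟨pullback.snd f g, by simpa [f] using pullback.condition (f := f) (g := g)⟩
    | cast i =>
      obtain ⟨q, hq⟩ := h i
      exact ⟨pullback.fst f g ≫ q, by simp [hq]⟩

end SubqAux

/-- The subcategory of subquotients of finite direct sums of copies of `B` is closed under
extensions whose class is a sum of pullback-pushouts of the class of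
`S : 0 → A → B → C → 0`: if `A'` and `C'` are subquotients of finite biproducts of copies
of `B` and `S' : 0 → A' → B' → C' → 0` has extension class `∑ᵢ ψᵢ^* (φᵢ)_* (extClass S)`,
then `B'` is a subquotient of a finite biproduct of copies of `B` as well. -/
theorem middle_isSubquotientOfFinitePower_of_extClass_eq_sum
    {ℬ : Type u} [Category.{v} ℬ] [Abelian ℬ] [HasExt.{w} ℬ]
    {S S' : ShortComplex ℬ} (hS : S.ShortExact) (hS' : S'.ShortExact)
    (hA' : IsSubquotientOfFinitePower S'.X₁ S.X₂)
    (hC' : IsSubquotientOfFinitePower S'.X₃ S.X₂)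
    (k : ℕ) (φ : Fin k → (S.X₁ ⟶ S'.X₁)) (ψ : Fin k → (S'.X₃ ⟶ S.X₃))
    (hclass : hS'.extClass = ∑ i : Fin k,
      (Ext.mk₀ (ψ i)).comp ((hS.extClass).comp (Ext.mk₀ (φ i)) (add_zero 1)) (zero_add 1)) :
    IsSubquotientOfFinitePower S'.X₂ S.X₂ := by
  have := hS.epi_g
  have := hS'.epi_g
  obtain ⟨P, p, hp, hP, h⟩ := SubqAux.exists_cover S.g hC' k ψ
  have h0 : (Ext.mk₀ p).comp hS'.extClass (zero_add 1) = 0 := by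
    rw [hclass, Ext.comp_sum]
    refine Finset.sum_eq_zero fun i _ => ?_
    obtain ⟨q, hq⟩ := h i
    rw [Ext.mk₀_comp_mk₀_assoc, hq, ← Ext.mk₀_comp_mk₀_assoc,
      ShortComplex.ShortExact.comp_extClass_assoc, Ext.comp_zero]
  obtain ⟨x, hx⟩ := Ext.covariant_sequence_exact₃ P hS' (Ext.mk₀ p) (zero_add 1) h0
  obtain ⟨t, rfl⟩ := (Ext.mk₀_bijective P S'.X₂).2 x
  rw [Ext.mk₀_comp_mk₀] at hx
  have ht : t ≫ S'.g = p := (Ext.mk₀_bijective P S'.X₃).1 hx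
  have : Epi (biprod.desc S'.f t) := by
    refine Preadditive.epi_of_cancel_zero _ fun {Z} u hu => ?_
    have h1 : S'.f ≫ u = 0 := by simpa using biprod.inl ≫= hu
    have h2 : t ≫ u = 0 := by simpa using biprod.inr ≫= hu
    have h3 : S'.g ≫ hS'.exact.desc u h1 = u := hS'.exact.g_desc u h1
    rw [← h3, ← Category.assoc, ht] at h2
    rw [← h3, zero_of_epi_comp p h2, comp_zero]
  exact SubqAux.of_epi (SubqAux.biprod hA' hP) (biprod.desc S'.f t)
end

section
/- Let α₁, …, αₙ be nonzero algebraic complex numbers (nonzero elements of ℂ that are algebraic over ℚ). Let ℚ̄ denote the subfield of ℂ consisting of all complex numbers algebraic over ℚ, and regard ℂ as a ℚ̄-vector space. Then the ℚ̄-dimension of the ℚ̄-linear span of {2πi, log α₁, …, log αₙ} in ℂ, minus 1, equals the rank of the multiplicative subgroup of ℂˣ generated by α₁, …, αₙ (i.e. the ℚ-dimension of that finitely generated abelian group tensored with ℚ). Here log denotes any fixed branch of the complex logarithm, e.g. the principal branch. -/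
open TensorProduct


namespace BakerProof

open NumberField

theorem exists_div (s : Multiset ℂ) : ∀ g : ℂ → ℂ, Differentiable ℂ g →
    (∀ a, (s.count a : ℕ∞) ≤ analyticOrderAt g a) →
    ∃ G : ℂ → ℂ, Differentiable ℂ G ∧ ∀ z, g z = (s.map (fun a => z - a)).prod * G z := by
  induction s using Multiset.induction_on with
  | empty => intro g hg _; exact ⟨g, hg, by simp⟩
  | cons a s ih =>
    intro g hg h
    have hga : g a = 0 := by
      apply apply_eq_zero_of_analyticOrderAt_ne_zero
      intro h0
      have := h a
      rw [h0] at this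
      simp at this
    have hG1 : Differentiable ℂ (dslope g a) := by
      have := (Complex.differentiableOn_dslope (f := g) (s := Set.univ) (c := a) Filter.univ_mem).2
        hg.differentiableOn
      exact differentiableOn_univ.1 this
    have hgG : ∀ z, g z = (z - a) * dslope g a z := by
      intro z
      have := sub_smul_dslope g a z
      simp only [hga, sub_zero, smul_eq_mul] at this
      exact this.symm
    have key : ∀ b, analyticOrderAt g b = analyticOrderAt (fun z => z - a) b
        + analyticOrderAt (dslope g a) b := by
      intro b
      have h1 : AnalyticAt ℂ (fun z => z - a) b := by fun_prop
      have h2 : AnalyticAt ℂ (dslope g a) b := hG1.analyticAt b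
      rw [← analyticOrderAt_mul h1 h2]
      congr 1
      ext z
      exact hgG z
    obtain ⟨G, hG, hGe⟩ := ih (dslope g a) hG1 (by
      intro b
      have hb := h b
      rw [key b] at hb
      by_cases hab : b = a
      · subst hab
        have : analyticOrderAt (fun z => z - b) b = 1 := by
          apply AnalyticAt.analyticOrderAt_eq_one_of_zero_deriv_ne_zero (by fun_prop) (by simp)
          simp
        rw [this, Multiset.count_cons_self] at hb
        push_cast at hb
        rw [add_comm] at hb
        exact (ENat.add_le_add_iff_left (by simp)).1 hb
      · have : analyticOrderAt (fun z => z - a) b = 0 := by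
          rw [analyticOrderAt_eq_zero]
          right
          exact sub_ne_zero.2 hab
        rw [this, Multiset.count_cons_of_ne hab, zero_add] at hb
        exact hb)
    refine ⟨G, hG, fun z => ?_⟩
    rw [hgG z, hGe z]
    simp [mul_assoc]

/-- One-variable Schwarz lemma: an entire function with zeros of order `≥ k` at `0, …, H-1`. -/
theorem schwarz (g : ℂ → ℂ) (hg : Differentiable ℂ g) (H k : ℕ) (R M : ℝ)
    (hR : 2 * (H : ℝ) + 2 ≤ R)
    (h0 : ∀ h < H, ∀ i < k, iteratedDeriv i g (h : ℂ) = 0)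
    (hM : ∀ z : ℂ, ‖z‖ = R → ‖g z‖ ≤ M) (a : ℕ) (ha : a < H) :
    ‖iteratedDeriv k g (a : ℂ)‖ ≤ k.factorial * ((2 * H / R) ^ (H * k) * M) := by
  have hH : (0 : ℝ) ≤ H := by positivity
  have hRpos : 0 < R := by linarith
  set s : Multiset ℂ := k • ((Multiset.range H).map (fun n : ℕ => (n : ℂ))) with hs
  have hnd : ((Multiset.range H).map (fun n : ℕ => (n : ℂ))).Nodup :=
    (Multiset.nodup_range H).map Nat.cast_injective
  obtain ⟨G, hG, hGe⟩ := exists_div s g hg (by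
    intro b
    rw [hs, Multiset.count_nsmul]
    by_cases hb : b ∈ (Multiset.range H).map (fun n : ℕ => (n : ℂ))
    · rw [Multiset.count_eq_one_of_mem hnd hb, mul_one]
      obtain ⟨n, hn, rfl⟩ := Multiset.mem_map.1 hb
      rw [natCast_le_analyticOrderAt_iff_iteratedDeriv_eq_zero (hg.analyticAt _)]
      exact h0 n (Multiset.mem_range.1 hn)
    · rw [Multiset.count_eq_zero_of_notMem hb]; simp)
  have hprod : ∀ z : ℂ, ‖(s.map (fun a => z - a)).prod‖ =
      (∏ n ∈ Finset.range H, ‖z - n‖) ^ k := by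
    intro z
    rw [hs, Multiset.map_nsmul, Multiset.prod_nsmul, norm_pow, Multiset.map_map]
    congr 1
    have : (Multiset.map ((fun a => z - a) ∘ fun n : ℕ => (n:ℂ)) (Multiset.range H)).prod
      = ∏ n ∈ Finset.range H, (z - n) := rfl
    rw [this, norm_prod]
  have hM0 : 0 ≤ M := (norm_nonneg _).trans (hM (R : ℂ) (by simp [abs_of_pos hRpos]))
  have hGb : ∀ z : ℂ, ‖z‖ ≤ R → ‖G z‖ ≤ M / ((R / 2) ^ (H * k)) := by
    intro z hz
    apply Complex.norm_le_of_forall_mem_frontier_norm_le (U := Metric.ball (0 : ℂ) R)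
      Metric.isBounded_ball hG.diffContOnCl
    · intro w hw
      rw [frontier_ball _ hRpos.ne'] at hw
      have hw' : ‖w‖ = R := by simpa using hw
      have h1 := hM w hw'
      rw [hGe w, norm_mul, hprod] at h1
      rw [le_div_iff₀ (by positivity), mul_comm]
      refine le_trans ?_ h1
      gcongr
      rw [pow_mul]
      gcongr
      calc (R / 2) ^ H = ∏ n ∈ Finset.range H, (R/2) := by
            rw [Finset.prod_const, Finset.card_range]
        _ ≤ _ := by
          apply Finset.prod_le_prod
          · intros; positivity
          · intro n hn
            have hn' : (n : ℝ) ≤ H := by exact_mod_cast (Finset.mem_range.1 hn).le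
            have := norm_sub_norm_le w (n : ℂ)
            rw [hw'] at this
            simp at this
            linarith
    · rw [closure_ball _ hRpos.ne']
      simpa using hz
  have := Complex.norm_iteratedDeriv_le_of_forall_mem_sphere_norm_le (f := g) (c := (a : ℂ))
    (R := 1) (C := (2 * H / R) ^ (H * k) * M) k one_pos hg.diffContOnCl (by
      intro z hz
      have hz' : ‖z - a‖ = 1 := by simpa using mem_sphere_iff_norm.1 hz
      have ha' : (a : ℝ) + 1 ≤ H := by exact_mod_cast ha
      have hzR : ‖z‖ ≤ R := by
        have := norm_sub_norm_le z (a : ℂ)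
        rw [hz'] at this
        simp at this
        linarith
      rw [hGe z, norm_mul, hprod]
      have h2 : (∏ n ∈ Finset.range H, ‖z - n‖) ^ k ≤ (H : ℝ) ^ (H * k) := by
        rw [pow_mul]
        gcongr
        calc ∏ n ∈ Finset.range H, ‖z - n‖ ≤ ∏ n ∈ Finset.range H, (H : ℝ) := by
              apply Finset.prod_le_prod
              · intros; positivity
              · intro n hn
                have hn' : n < H := Finset.mem_range.1 hn
                have e : z - n = (z - a) + (((a : ℤ) - n : ℤ) : ℂ) := by push_cast; ring
                rw [e]
                refine (norm_add_le _ _).trans ?_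
                rw [hz', Complex.norm_intCast]
                have : |((a : ℤ) - n)| ≤ (H : ℤ) - 1 := by rw [abs_le]; omega
                have : ((|((a : ℤ) - n)| : ℤ) : ℝ) ≤ ((H : ℤ) - 1 : ℤ) := by exact_mod_cast this
                push_cast at this ⊢
                linarith
          _ = _ := by simp
      calc _ ≤ (H : ℝ) ^ (H * k) * (M / ((R / 2) ^ (H * k))) := by
              gcongr
              exact hGb z hzR
        _ = _ := by
          rw [div_pow, div_pow, mul_pow]
          field_simp)
  simpa [mul_div_assoc] using this

theorem siegel_aux (K : Type) [Field K] [NumberField K] : ∃ c : ℝ,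
    ∀ (α β : Type) [Fintype α] [Fintype β] (a : Matrix α β (𝓞 K)) (A : ℝ), a ≠ 0 →
      0 < Fintype.card α → Fintype.card α < Fintype.card β →
      (∀ k l, house (algebraMap (𝓞 K) K (a k l)) ≤ A) →
      ∃ ξ : β → 𝓞 K, ξ ≠ 0 ∧ Matrix.mulVec a ξ = 0 ∧
        ∀ l, house (algebraMap (𝓞 K) K (ξ l)) ≤ c * ((c * (Fintype.card β : ℕ) * A) ^
          (((Fintype.card α : ℕ) : ℝ) / ((Fintype.card β : ℕ) - (Fintype.card α : ℕ)))) := by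
  classical
  refine ⟨?_, ?_⟩
  swap
  · intro α β _ _ a A ha hp hpq hA
    exact house.exists_ne_zero_int_vec_house_le K a ha hp hpq rfl hA rfl

theorem siegel (K : Type) [Field K] [NumberField K] : ∃ c : ℝ, 1 ≤ c ∧
    ∀ (α β : Type) [Fintype α] [Fintype β] (a : Matrix α β (𝓞 K)) (A : ℝ), 1 ≤ A →
      0 < Fintype.card β → 2 * Fintype.card α ≤ Fintype.card β →
      (∀ k l, house (algebraMap (𝓞 K) K (a k l)) ≤ A) →
      ∃ ξ : β → 𝓞 K, ξ ≠ 0 ∧ Matrix.mulVec a ξ = 0 ∧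
        ∀ l, house (algebraMap (𝓞 K) K (ξ l)) ≤ c ^ 2 * Fintype.card β * A := by
  obtain ⟨c, hc⟩ := siegel_aux K
  refine ⟨max 1 |c|, le_max_left _ _, fun α β _ _ a A hA hβ h2 hh => ?_⟩
  set C := max 1 |c| with hC
  have hC1 : 1 ≤ C := le_max_left _ _
  have hcC : |c| ≤ C := le_max_right _ _
  have hβ1 : (1 : ℝ) ≤ Fintype.card β := by exact_mod_cast hβ
  have hB1 : 1 ≤ C * Fintype.card β * A := by
    calc (1 : ℝ) = 1 * 1 * 1 := by norm_num
      _ ≤ _ := by gcongr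
  by_cases ha : a = 0
  · refine ⟨fun _ => 1, ?_, ?_, ?_⟩
    · obtain ⟨b⟩ := Fintype.card_pos_iff.1 hβ
      intro h; simpa using congrFun h b
    · rw [ha]; simp
    · intro l
      have : house (algebraMap (𝓞 K) K 1) = 1 := by
        have := house_intCast (K := K) 1
        simpa using this
      rw [this]
      calc (1 : ℝ) ≤ C * (C * Fintype.card β * A) := one_le_mul_of_one_le_of_one_le hC1 hB1
        _ = _ := by ring
  · have hp : 0 < Fintype.card α := by
      rw [Fintype.card_pos_iff]
      by_contra hne
      rw [not_nonempty_iff] at hne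
      exact ha (Matrix.ext fun i => hne.elim i)
    obtain ⟨ξ, h1, h3, h4⟩ := hc α β a A ha hp (by omega) hh
    refine ⟨ξ, h1, h3, fun l => (h4 l).trans ?_⟩
    set p := (Fintype.card α : ℝ)
    set q := (Fintype.card β : ℝ)
    have hp' : 0 < p := by simp only [p]; exact_mod_cast hp
    have hpq : 2 * p ≤ q := by simp only [p, q]; exact_mod_cast h2
    have he : p / (q - p) ≤ 1 := by
      rw [div_le_one (by linarith)]; linarith
    have he0 : 0 ≤ p / (q - p) := div_nonneg hp'.le (by linarith)
    have hb : |(c * q * A) ^ (p / (q - p))| ≤ C * q * A := by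
      refine (Real.abs_rpow_le_abs_rpow _ _).trans ?_
      calc |c * q * A| ^ (p / (q - p)) ≤ (C * q * A) ^ (p / (q - p)) := by
            apply Real.rpow_le_rpow (abs_nonneg _) _ he0
            rw [abs_mul, abs_mul, abs_of_nonneg (show (0:ℝ) ≤ q by linarith),
              abs_of_nonneg (show (0:ℝ) ≤ A by linarith)]
            gcongr
        _ ≤ (C * q * A) ^ (1 : ℝ) := Real.rpow_le_rpow_of_exponent_le hB1 he
        _ = _ := Real.rpow_one _
    calc c * (c * q * A) ^ (p / (q - p)) ≤ |c * (c * q * A) ^ (p / (q - p))| := le_abs_self _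
      _ = |c| * |(c * q * A) ^ (p / (q - p))| := abs_mul _ _
      _ ≤ C * (C * q * A) := by gcongr
      _ = _ := by ring

end BakerProof


namespace BakerProof

open NumberField

theorem iteratedDeriv_expsum {Λ : Type} [Fintype Λ] (q Y : Λ → ℂ) (n : ℕ) :
    iteratedDeriv n (fun z : ℂ => ∑ l, q l * Complex.exp (z * Y l)) =
      fun z : ℂ => ∑ l, q l * Y l ^ n * Complex.exp (z * Y l) := by
  induction n with
  | zero => simp
  | succ n ih =>
    rw [iteratedDeriv_succ, ih]
    funext z
    apply HasDerivAt.deriv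
    apply HasDerivAt.fun_sum
    intro l _
    have h1 : HasDerivAt (fun z : ℂ => z * Y l) (Y l) z := by
      simpa using (hasDerivAt_id z).mul_const (Y l)
    have h2 := (h1.cexp).const_mul (q l * Y l ^ n)
    refine h2.congr_deriv ?_
    ring

/-- Linear change of variables in words. -/
theorem word_expand {Λ S ι κ : Type} [Fintype Λ] [Fintype S] [Fintype κ] [DecidableEq κ]
    (P : Λ → ℂ) (X : S → Λ → ℂ) (Y : ι → Λ → ℂ) (v : S → ι → ℂ)
    (hY : ∀ j l, Y j l = ∑ σ, v σ j * X σ l) (w : κ → ι) :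
    ∑ l, P l * ∏ k, Y (w k) l =
      ∑ s : κ → S, (∏ k, v (s k) (w k)) * ∑ l, P l * ∏ k, X (s k) l := by
  classical
  simp_rw [hY, Finset.prod_univ_sum, Finset.mul_sum]
  rw [Finset.sum_comm]
  simp only [Fintype.piFinset_univ, Finset.prod_mul_distrib]
  refine Finset.sum_congr rfl fun s _ => Finset.sum_congr rfl fun l _ => ?_
  ring

theorem analytic_bound {Λ S ι : Type} [Fintype Λ] [Fintype S] [Fintype ι] [Nonempty ι]
    (p : Λ → ℂ) (X : S → Λ → ℂ) (Y : ι → Λ → ℂ) (v c : S → ι → ℂ)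
    (hY : ∀ j l, Y j l = ∑ σ, v σ j * X σ l)
    (hX : ∀ σ l, X σ l = ∑ j, c σ j * Y j l)
    (H H1 τ : ℕ) (hH : H = Fintype.card ι * H1) (P B A R : ℝ)
    (hP : ∀ l, ‖p l‖ ≤ P) (hB1 : 1 ≤ B) (hB : ∀ j l, ‖Y j l‖ ≤ B) (hA0 : 0 ≤ A)
    (hA : ∀ σ j, ‖c σ j‖ ≤ A)
    (hR : 2 * (H : ℝ) + 2 ≤ R) (hP0 : 0 ≤ P)
    (hvan : ∀ n < τ, ∀ s : Fin n → S, ∀ h : ι → ℕ, (∀ j, h j < H) →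
      ∑ l, (p l * Complex.exp (∑ j, (h j : ℂ) * Y j l)) * ∏ k, X (s k) l = 0)
    (s : Fin τ → S) (h : ι → ℕ) (hh : ∀ j, h j < H) :
    ‖∑ l, (p l * Complex.exp (∑ j, (h j : ℂ) * Y j l)) * ∏ k, X (s k) l‖ ≤
      (Fintype.card ι * A) ^ τ * (τ.factorial * ((2 * H / R) ^ (H1 * τ) *
        (Fintype.card Λ * (P * B ^ τ * Real.exp (B * (Fintype.card ι * H + R)))))) := by
  classical
  have hRpos : 0 < R := by have : (0 : ℝ) ≤ H := by positivity
                           linarith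
  set E : ℝ := (τ.factorial * ((2 * H / R) ^ (H1 * τ) *
        (Fintype.card Λ * (P * B ^ τ * Real.exp (B * (Fintype.card ι * H + R)))))) with hE
  -- vanishing for words in `Y`
  have hvanY : ∀ (κ : Type) [Fintype κ], Fintype.card κ < τ → ∀ w : κ → ι,
      ∀ h : ι → ℕ, (∀ j, h j < H) →
      ∑ l, (p l * Complex.exp (∑ j, (h j : ℂ) * Y j l)) * ∏ k, Y (w k) l = 0 := by
    intro κ _ hκ w h hh
    rw [word_expand _ X Y v hY w]
    apply Finset.sum_eq_zero
    intro s _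
    have := hvan _ hκ (s ∘ (Fintype.equivFin κ).symm) h hh
    have e : ∀ l, ∏ k, X (s k) l = ∏ k, X ((s ∘ (Fintype.equivFin κ).symm) k) l := by
      intro l
      rw [← Equiv.prod_comp (Fintype.equivFin κ)]
      simp
    simp_rw [e, this, mul_zero]
  -- bound for words in `Y`
  have hbdY : ∀ w : Fin τ → ι,
      ‖∑ l, (p l * Complex.exp (∑ j, (h j : ℂ) * Y j l)) * ∏ k, Y (w k) l‖ ≤ E := by
    intro w
    obtain ⟨i, hi⟩ : ∃ i, τ ≤ Fintype.card ι * (Finset.univ.filter (fun k => w k = i)).card := by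
      by_contra! hcon
      have h1 : ∑ i : ι, (Finset.univ.filter (fun k => w k = i)).card = τ := by
        have := Finset.card_eq_sum_card_fiberwise (f := w) (s := Finset.univ) (t := Finset.univ)
          (by simp)
        simpa using this.symm
      have h2 : ∑ i : ι, Fintype.card ι * (Finset.univ.filter (fun k => w k = i)).card <
          ∑ i : ι, τ := Finset.sum_lt_sum_of_nonempty Finset.univ_nonempty (fun i _ => hcon i)
      rw [← Finset.mul_sum, h1] at h2
      simp at h2
    set k0 := (Finset.univ.filter (fun k => w k = i)).card with hk0
    have hk0τ : k0 ≤ τ := by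
      have := Finset.card_filter_le (Finset.univ : Finset (Fin τ)) (fun k => w k = i)
      simpa using this
    have hcard' : (Finset.univ.filter (fun k => ¬ w k = i)).card = τ - k0 := by
      have := Finset.card_filter_add_card_filter_not (s := (Finset.univ : Finset (Fin τ)))
        (fun k => w k = i)
      simp only [Finset.card_univ, Fintype.card_fin] at this
      omega
    set q : Λ → ℂ := fun l => p l * Complex.exp (∑ j ∈ Finset.univ.erase i, (h j : ℂ) * Y j l) *
      ∏ k ∈ Finset.univ.filter (fun k => ¬ w k = i), Y (w k) l with hq
    set g : ℂ → ℂ := fun z => ∑ l, q l * Complex.exp (z * Y i l) with hg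
    have hgd : Differentiable ℂ g := by
      rw [hg]; fun_prop
    have hgder : ∀ n, ∀ m : ℕ, iteratedDeriv n g (m : ℂ) =
        ∑ l, (p l * Complex.exp (∑ j, (Function.update h i m j : ℂ) * Y j l)) *
          ((∏ k ∈ Finset.univ.filter (fun k => ¬ w k = i), Y (w k) l) * Y i l ^ n) := by
      intro n m
      rw [hg, iteratedDeriv_expsum]
      refine Finset.sum_congr rfl fun l _ => ?_
      have e : ∑ j, (Function.update h i m j : ℂ) * Y j l = m * Y i l +
          ∑ j ∈ Finset.univ.erase i, (h j : ℂ) * Y j l := by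
        rw [← Finset.add_sum_erase _ _ (Finset.mem_univ i)]
        congr 1
        · simp
        · refine Finset.sum_congr rfl fun j hj => ?_
          rw [Function.update_of_ne (Finset.ne_of_mem_erase hj)]
      rw [e, Complex.exp_add, hq]
      ring
    have hupd : ∀ m < H, ∀ j, Function.update h i m j < H := by
      intro m hm j
      by_cases hj : j = i
      · subst hj; simpa using hm
      · rw [Function.update_of_ne hj]; exact hh j
    have hz : ∀ m < H, ∀ n < k0, iteratedDeriv n g (m : ℂ) = 0 := by
      intro m hm n hn
      rw [hgder]
      have := hvanY ({k // ¬ w k = i} ⊕ Fin n) (by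
        rw [Fintype.card_sum, Fintype.card_fin, Fintype.card_subtype, hcard']
        omega) (Sum.elim (fun k => w k) (fun _ => i)) (Function.update h i m) (hupd m hm)
      rw [← this]
      refine Finset.sum_congr rfl fun l _ => ?_
      congr 1
      rw [Fintype.prod_sum_type]
      simp only [Sum.elim_inl, Sum.elim_inr, Finset.prod_const, Finset.card_univ, Fintype.card_fin]
      congr 1
      exact (Finset.prod_subtype (Finset.univ.filter (fun k => ¬ w k = i)) (by simp)
        (fun k => Y (w k) l))
    have hval : ∑ l, (p l * Complex.exp (∑ j, (h j : ℂ) * Y j l)) * ∏ k, Y (w k) l =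
        iteratedDeriv k0 g (h i : ℂ) := by
      rw [hgder]
      refine Finset.sum_congr rfl fun l _ => ?_
      rw [Function.update_eq_self]
      congr 1
      rw [← Finset.prod_filter_mul_prod_filter_not Finset.univ (fun k => w k = i), mul_comm]
      congr 1
      rw [Finset.prod_congr rfl (g := fun _ => Y i l), Finset.prod_const]
      intro k hk
      rw [(Finset.mem_filter.1 hk).2]
    set M : ℝ := Fintype.card Λ * (P * B ^ τ * Real.exp (B * (Fintype.card ι * H + R))) with hM
    have hgM : ∀ z : ℂ, ‖z‖ = R → ‖g z‖ ≤ M := by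
      intro z hzR
      rw [hg]
      refine (norm_sum_le _ _).trans ?_
      rw [hM, ← nsmul_eq_mul, ← Finset.card_univ]
      apply Finset.sum_le_card_nsmul
      intro l _
      rw [hq]
      simp only [norm_mul, norm_prod, Complex.norm_exp]
      have e1 : ∏ k ∈ Finset.univ.filter (fun k => ¬ w k = i), ‖Y (w k) l‖ ≤ B ^ τ := by
        calc _ ≤ ∏ k ∈ Finset.univ.filter (fun k => ¬ w k = i), B :=
              Finset.prod_le_prod (fun _ _ => norm_nonneg _) (fun _ _ => hB _ _)
          _ = B ^ (τ - k0) := by rw [Finset.prod_const, hcard']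
          _ ≤ B ^ τ := pow_le_pow_right₀ hB1 (Nat.sub_le _ _)
      have e2 : (∑ j ∈ Finset.univ.erase i, (h j : ℂ) * Y j l).re ≤ B * (Fintype.card ι * H) := by
        refine (Complex.re_le_norm _).trans ((norm_sum_le _ _).trans ?_)
        calc ∑ j ∈ Finset.univ.erase i, ‖(h j : ℂ) * Y j l‖
            ≤ ∑ j ∈ Finset.univ.erase i, (H : ℝ) * B := by
              apply Finset.sum_le_sum
              intro j _
              rw [norm_mul, Complex.norm_natCast]
              have : (h j : ℝ) ≤ H := by exact_mod_cast (hh j).le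
              gcongr
              exact hB j l
          _ ≤ ∑ j : ι, (H : ℝ) * B := by
              apply Finset.sum_le_sum_of_subset_of_nonneg (Finset.erase_subset _ _)
              intros; positivity
          _ = _ := by simp; ring
      have e3 : (z * Y i l).re ≤ B * R := by
        refine (Complex.re_le_norm _).trans ?_
        rw [norm_mul, hzR, mul_comm]
        gcongr
        exact hB i l
      calc ‖p l‖ * Real.exp (∑ j ∈ Finset.univ.erase i, (h j : ℂ) * Y j l).re *
            (∏ k ∈ Finset.univ.filter (fun k => ¬ w k = i), ‖Y (w k) l‖) *
            Real.exp (z * Y i l).re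
          ≤ P * Real.exp (B * (Fintype.card ι * H)) * B ^ τ * Real.exp (B * R) := by
            gcongr
            exact hP l
        _ = _ := by rw [mul_add, Real.exp_add]; ring
    have := schwarz g hgd H k0 R M hR hz hgM (h i) (hh i)
    rw [hval, hE]
    refine this.trans ?_
    have hM0 : 0 ≤ M := by rw [hM]; positivity
    have hq0 : 0 ≤ 2 * H / R := by positivity
    have hq1 : 2 * H / R ≤ 1 := by rw [div_le_one hRpos]; linarith
    gcongr ?_ * (?_ * _)
    · exact_mod_cast Nat.factorial_le hk0τ
    · apply pow_le_pow_of_le_one hq0 hq1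
      rw [hH]
      calc H1 * τ ≤ H1 * (Fintype.card ι * k0) := Nat.mul_le_mul_left _ hi
        _ = _ := by ring
  rw [word_expand _ Y X (fun j σ => c σ j) (fun σ l => hX σ l) s]
  refine (norm_sum_le _ _).trans ?_
  calc _ ≤ ∑ w : Fin τ → ι, A ^ τ * E := by
        apply Finset.sum_le_sum
        intro w _
        rw [norm_mul, norm_prod]
        gcongr
        · calc _ ≤ ∏ k : Fin τ, A := Finset.prod_le_prod (fun _ _ => norm_nonneg _)
                (fun _ _ => hA _ _)
            _ = A ^ τ := by simp
        · exact hbdY w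
    _ = _ := by
      simp [mul_pow]; ring

end BakerProof


namespace BakerProof

open NumberField

section entries

variable {O S ι : Type} [CommRing O] [Fintype ι]

/-- The monomial in the (numerators of the) exponentials. -/
def ent (b : ι → ι → O) (q : O) (L H : ℕ) (h : ι → ℕ) (l : ι → Fin L) : O :=
  ∏ i, ∏ j, b i j ^ ((l i : ℕ) * h j) * q ^ (L * H - (l i : ℕ) * h j)

/-- The linear forms `∑ lᵢ xᵢ`. -/
def xh {L : ℕ} (x : S → ι → O) (σ : S) (l : ι → Fin L) : O := ∑ i, ((l i : ℕ) : O) * x σ i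

theorem mul_lt_aux {ι : Type} {L H : ℕ} {h : ι → ℕ} (hh : ∀ j, h j < H) (l : ι → Fin L) (i j : ι) :
    (l i : ℕ) * h j ≤ L * H := Nat.mul_le_mul (l i).2.le (hh j).le

theorem ent_val (θ : O →+* ℂ) (b : ι → ι → O) (q : O) (Φ : ι → ι → ℂ)
    (hb : ∀ i j, θ (b i j) = θ q * Complex.exp (Φ i j)) (L H : ℕ) (h : ι → ℕ)
    (hh : ∀ j, h j < H) (l : ι → Fin L) :
    θ (ent b q L H h l) = θ q ^ (Fintype.card ι * (Fintype.card ι * (L * H))) *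
      Complex.exp (∑ j, (h j : ℂ) * ∑ i, ((l i : ℕ) : ℂ) * Φ i j) := by
  have e : ∀ i j, θ (b i j) ^ ((l i : ℕ) * h j) * θ q ^ (L * H - (l i : ℕ) * h j) =
      θ q ^ (L * H) * Complex.exp (((l i : ℕ) * h j : ℕ) * Φ i j) := by
    intro i j
    rw [hb, mul_pow, Complex.exp_nat_mul]
    conv_rhs => rw [← Nat.add_sub_cancel' (mul_lt_aux hh l i j), pow_add]
    ring
  rw [ent, map_prod]
  simp_rw [map_prod, map_mul, map_pow, e, Finset.prod_mul_distrib, Finset.prod_const,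
    ← Complex.exp_sum, Finset.card_univ]
  rw [← pow_mul, ← pow_mul]
  congr 2
  · ring
  · rw [Finset.sum_comm]
    refine Finset.sum_congr rfl fun j _ => ?_
    rw [Finset.mul_sum]
    refine Finset.sum_congr rfl fun i _ => ?_
    push_cast
    ring

theorem ent_bound (θ : O →+* ℂ) (b : ι → ι → O) (q : O) (C : ℝ)
    (hb : ∀ i j, ‖θ (b i j)‖ ≤ C) (hq : ‖θ q‖ ≤ C) (L H : ℕ) (h : ι → ℕ)
    (hh : ∀ j, h j < H) (l : ι → Fin L) :
    ‖θ (ent b q L H h l)‖ ≤ (C ^ (Fintype.card ι * Fintype.card ι)) ^ (L * H) := by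
  have hC0 : 0 ≤ C := (norm_nonneg _).trans hq
  rw [ent, map_prod, norm_prod]
  calc _ ≤ ∏ i : ι, ∏ j : ι, C ^ (L * H) := by
        apply Finset.prod_le_prod (fun _ _ => norm_nonneg _)
        intro i _
        rw [map_prod, norm_prod]
        apply Finset.prod_le_prod (fun _ _ => norm_nonneg _)
        intro j _
        rw [map_mul, map_pow, map_pow, norm_mul, norm_pow, norm_pow]
        calc _ ≤ C ^ ((l i : ℕ) * h j) * C ^ (L * H - (l i : ℕ) * h j) := by
              gcongr
              exact hb i j
          _ = _ := by rw [← pow_add, Nat.add_sub_cancel' (mul_lt_aux hh l i j)]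
    _ = _ := by
      simp only [Finset.prod_const, Finset.card_univ, ← pow_mul]
      congr 1; ring

theorem xh_bound (θ : O →+* ℂ) (x : S → ι → O) (A : ℝ)
    (hx : ∀ σ i, Fintype.card ι * ‖θ (x σ i)‖ ≤ A) (σ : S) {L : ℕ} (l : ι → Fin L)
    [Nonempty ι] : ‖θ (xh x σ l)‖ ≤ A * L := by
  classical
  rw [xh, map_sum]
  have hd : (0 : ℝ) < Fintype.card ι := by exact_mod_cast Fintype.card_pos
  refine (norm_sum_le _ _).trans ?_
  calc _ ≤ ∑ i : ι, (L * (A / Fintype.card ι)) := by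
        apply Finset.sum_le_sum
        intro i _
        rw [map_mul, norm_mul, map_natCast, Complex.norm_natCast]
        have h1 : ((l i : ℕ) : ℝ) ≤ L := by exact_mod_cast (l i).2.le
        have h2 : ‖θ (x σ i)‖ ≤ A / Fintype.card ι := by
          rw [le_div_iff₀ hd, mul_comm]; exact hx σ i
        gcongr
    _ = _ := by
      rw [Finset.sum_const, nsmul_eq_mul, Finset.card_univ]; field_simp

theorem xh_val (θ : O →+* ℂ) (x : S → ι → O) (σ : S) {L : ℕ} (l : ι → Fin L) :
    θ (xh x σ l) = ∑ i, ((l i : ℕ) : ℂ) * θ (x σ i) := by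
  simp [xh]

end entries

theorem one_le_of_ne_zero {F : Type} [Field F] [NumberField F] (ψ : F →+* ℂ) (z : 𝓞 F)
    (hz : z ≠ 0) (U V : ℝ) (hU : ‖ψ (algebraMap (𝓞 F) F z)‖ ≤ U)
    (hV : ∀ φ : F →+* ℂ, ‖φ (algebraMap (𝓞 F) F z)‖ ≤ V) :
    1 ≤ U * V ^ (Module.finrank ℚ F - 1) := by
  have h1 := norm_norm_le_norm_mul_house_pow (algebraMap (𝓞 F) F z) ψ
  have h2 : house (algebraMap (𝓞 F) F z) ≤ V := (canonicalEmbedding.norm_le_iff _ _).2 hV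
  have h3 : (1 : ℝ) ≤ ‖Algebra.norm ℚ (algebraMap (𝓞 F) F z)‖ := by
    have e := Algebra.coe_norm_int z
    have hne : Algebra.norm ℤ z ≠ 0 := by
      rw [Ne, Algebra.norm_eq_zero_iff]; exact hz
    rw [← show ((Algebra.norm ℤ z : ℤ) : ℚ) = Algebra.norm ℚ (algebraMap (𝓞 F) F z) from e]
    rw [← Rat.norm_cast_real]
    push_cast
    rw [Real.norm_eq_abs, ← Int.cast_abs]
    exact_mod_cast Int.one_le_abs hne
  refine h3.trans (h1.trans ?_)
  have := house_nonneg (algebraMap (𝓞 F) F z)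
  gcongr
  exact (norm_nonneg _).trans hU

theorem exists_pow_ne {O Λ : Type} [CommRing O] [IsDomain O] [Fintype Λ] (f p : Λ → O)
    (hf : Function.Injective f) (hp : p ≠ 0) : ∃ n : ℕ, ∑ l, p l * f l ^ n ≠ 0 := by
  by_contra! hcon
  apply hp
  have e := Fintype.equivFin Λ
  have := Matrix.eq_zero_of_forall_pow_sum_mul_pow_eq_zero (f := f ∘ e.symm) (v := p ∘ e.symm)
    (hf.comp e.symm.injective) (by
      intro i
      rw [← hcon i, ← Equiv.sum_comp e]
      simp)
  funext l
  have := congrFun this (e l)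
  simpa using this

theorem core_param (F : Type) [Field F] [NumberField F] (ψ : F →+* ℂ)
    {S ι : Type} [Fintype S] [Fintype ι] (hcard : Fintype.card S < Fintype.card ι)
    (x : S → ι → 𝓞 F) (b : ι → ι → 𝓞 F) (q : 𝓞 F) (Φ : ι → ι → ℂ) (v c : S → ι → ℂ)
    (hq : q ≠ 0)
    (hb : ∀ i j, ψ (algebraMap (𝓞 F) F (b i j)) =
      ψ (algebraMap (𝓞 F) F q) * Complex.exp (Φ i j))
    (hv : ∀ i j, Φ i j = ∑ σ, v σ j * ψ (algebraMap (𝓞 F) F (x σ i)))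
    (hc : ∀ σ i, ψ (algebraMap (𝓞 F) F (x σ i)) = ∑ j, c σ j * Φ i j)
    (σ0 : S) (hinj : ∀ μ : ι → ℤ, ∑ i, (μ i : 𝓞 F) * x σ0 i = 0 → μ = 0)
    (A C c1 : ℝ) (hA1 : 1 ≤ A)
    (hCA : C ^ (Fintype.card ι * Fintype.card ι) ≤ A)
    (hbC : ∀ i j, ∀ φ : F →+* ℂ, ‖φ (algebraMap (𝓞 F) F (b i j))‖ ≤ C)
    (hqC : ∀ φ : F →+* ℂ, ‖φ (algebraMap (𝓞 F) F q)‖ ≤ C)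
    (hxA : ∀ σ i, ∀ φ : F →+* ℂ, Fintype.card ι * ‖φ (algebraMap (𝓞 F) F (x σ i))‖ ≤ A)
    (hΦA : ∀ i j, Fintype.card ι * ‖Φ i j‖ ≤ A) (hcA : ∀ σ j, ‖c σ j‖ ≤ A)
    (hc1 : 1 ≤ c1)
    (hsieg : ∀ (α β : Type) [Fintype α] [Fintype β] (a : Matrix α β (𝓞 F)) (A : ℝ), 1 ≤ A →
      0 < Fintype.card β → 2 * Fintype.card α ≤ Fintype.card β →
      (∀ k l, house (algebraMap (𝓞 F) F (a k l)) ≤ A) →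
      ∃ ξ : β → 𝓞 F, ξ ≠ 0 ∧ Matrix.mulVec a ξ = 0 ∧
        ∀ l, house (algebraMap (𝓞 F) F (ξ l)) ≤ c1 ^ 2 * Fintype.card β * A)
    (d N H1 H L T : ℕ) (hd : d = Fintype.card ι) (hH : H = d * H1) (hH1 : 1 ≤ H1) (hN : 1 ≤ N)
    (hL : L = 2 * H * N ^ (d - 1)) (hT : T = N ^ d) (P : ℝ)
    (hP : P = c1 ^ 2 * (L : ℝ) ^ d * ((A * L) ^ (d * T) * A ^ (L * H))) :
    ∃ τ ≥ T, ∀ R : ℝ, 2 * (H : ℝ) + 2 ≤ R →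
      1 ≤ (A ^ (L * H) * ((d * A) ^ τ * (τ.factorial * ((2 * H / R) ^ (H1 * τ) *
        ((L : ℝ) ^ d * (P * (A * L) ^ τ * Real.exp ((A * L) * (d * H + R)))))))) *
        ((L : ℝ) ^ d * (P * ((A * L) ^ τ * A ^ (L * H)))) ^ (Module.finrank ℚ F - 1) := by
  classical
  have hd2 : 1 ≤ d := by omega
  have hHpos : 1 ≤ H := by rw [hH]; exact Nat.mul_pos hd2 hH1
  have hLpos : 1 ≤ L := by rw [hL]; exact Nat.mul_pos (by omega) (Nat.pow_pos hN)
  have hL1 : (1 : ℝ) ≤ L := by exact_mod_cast hLpos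
  have hAL : 1 ≤ A * L := one_le_mul_of_one_le_of_one_le hA1 hL1
  have hιne : Nonempty ι := Fintype.card_pos_iff.1 (by omega)
  have hcardL : Fintype.card (ι → Fin L) = L ^ d := by simp [hd]
  -- bounds
  have entB : ∀ (φ : F →+* ℂ) (h : ι → ℕ), (∀ j, h j < H) → ∀ l : ι → Fin L,
      ‖φ (algebraMap (𝓞 F) F (ent b q L H h l))‖ ≤ A ^ (L * H) := by
    intro φ h hh l
    refine (ent_bound (φ.comp (algebraMap (𝓞 F) F)) b q C (fun i j => hbC i j φ) (hqC φ) L H h hh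
      l).trans ?_
    have : 0 ≤ C := (norm_nonneg _).trans (hqC φ)
    gcongr
  have xhB : ∀ (φ : F →+* ℂ) (σ : S) (l : ι → Fin L),
      ‖φ (algebraMap (𝓞 F) F (xh x σ l))‖ ≤ A * L := by
    intro φ σ l
    exact xh_bound (φ.comp (algebraMap (𝓞 F) F)) x A (fun σ i => hxA σ i φ) σ l
  -- Siegel
  obtain ⟨ξ, hξ0, hξ, hξB⟩ := hsieg ((S → Fin T) × (ι → Fin H)) (ι → Fin L)
    (Matrix.of fun r l => (∏ σ, xh x σ l ^ (r.1 σ : ℕ)) * ent b q L H (fun j => r.2 j) l)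
    ((A * L) ^ (d * T) * A ^ (L * H))
    (one_le_mul_of_one_le_of_one_le (one_le_pow₀ hAL) (one_le_pow₀ hA1))
    (by rw [hcardL]; exact Nat.pow_pos hLpos)
    (by
      rw [hcardL, Fintype.card_prod]
      simp only [Fintype.card_pi, Fintype.card_fin, Finset.prod_const, Finset.card_univ]
      rw [← hd, hL, hT, mul_pow, mul_pow]
      have h1 : (N ^ d) ^ Fintype.card S ≤ (N ^ (d - 1)) ^ d := by
        rw [← pow_mul, ← pow_mul, mul_comm (d - 1)]
        apply Nat.pow_le_pow_right hN
        apply Nat.mul_le_mul_left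
        omega
      have h2 : 2 ≤ 2 ^ d := by
        calc 2 = 2 ^ 1 := by norm_num
          _ ≤ 2 ^ d := Nat.pow_le_pow_right (by norm_num) hd2
      calc 2 * ((N ^ d) ^ Fintype.card S * H ^ d) ≤ 2 ^ d * ((N ^ (d - 1)) ^ d * H ^ d) := by
            gcongr
        _ = _ := by ring)
    (by
      intro r l
      refine (canonicalEmbedding.norm_le_iff _ _).2 fun φ => ?_
      rw [Matrix.of_apply, map_mul, map_mul, norm_mul]
      gcongr
      · rw [map_prod, map_prod, norm_prod]
        calc _ ≤ ∏ σ : S, (A * L) ^ T := by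
              apply Finset.prod_le_prod (fun _ _ => norm_nonneg _)
              intro σ _
              rw [map_pow, map_pow, norm_pow]
              calc _ ≤ (A * L) ^ (r.1 σ : ℕ) := by gcongr; exact xhB φ σ l
                _ ≤ _ := pow_le_pow_right₀ hAL (r.1 σ).2.le
          _ = (A * L) ^ (T * Fintype.card S) := by
              rw [Finset.prod_const, ← pow_mul, Finset.card_univ]
          _ ≤ _ := by
              apply pow_le_pow_right₀ hAL
              rw [mul_comm]
              apply Nat.mul_le_mul_right
              omega
      · exact entB φ _ (fun j => (r.2 j).2) l)
  have hξP : ∀ (φ : F →+* ℂ) l, ‖φ (algebraMap (𝓞 F) F (ξ l))‖ ≤ P := by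
    intro φ l
    refine (norm_embedding_le_house _ φ).trans ((hξB l).trans ?_)
    rw [hcardL, hP]
    push_cast
    exact le_rfl
  -- the algebraic integers
  set Z : ∀ n : ℕ, (Fin n → S) → (ι → ℕ) → 𝓞 F := fun n s h =>
    ∑ l, ξ l * ((∏ k, xh x (s k) l) * ent b q L H h l) with hZ
  have hZsmall : ∀ n < T, ∀ (s : Fin n → S) (h : ι → ℕ), (∀ j, h j < H) → Z n s h = 0 := by
    intro n hn s h hh
    have := congrFun hξ (fun σ => ⟨(Finset.univ.filter (fun k => s k = σ)).card, by
      refine lt_of_le_of_lt ?_ hn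
      have := Finset.card_filter_le (Finset.univ : Finset (Fin n)) (fun k => s k = σ)
      simpa using this⟩, fun j => ⟨h j, hh j⟩)
    simp only [Matrix.mulVec, dotProduct, Matrix.of_apply, Pi.zero_apply] at this
    rw [← this]
    refine Finset.sum_congr rfl fun l _ => ?_
    rw [mul_comm]
    congr 2
    rw [← Finset.prod_fiberwise Finset.univ s]
    refine Finset.prod_congr rfl fun σ _ => ?_
    rw [Finset.prod_congr rfl (g := fun _ => xh x σ l), Finset.prod_const]
    intro k hk
    rw [(Finset.mem_filter.1 hk).2]
  have hex : ∃ n, ∃ (s : Fin n → S) (h : ι → ℕ), (∀ j, h j < H) ∧ Z n s h ≠ 0 := by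
    obtain ⟨n, hn⟩ := exists_pow_ne (fun l : ι → Fin L => xh x σ0 l) ξ (by
      intro l l' hll
      simp only [xh] at hll
      have := hinj (fun i => ((l i : ℕ) : ℤ) - ((l' i : ℕ) : ℤ)) (by
        push_cast
        simp_rw [sub_mul]
        rw [Finset.sum_sub_distrib, hll, sub_self])
      funext i
      have := congrFun this i
      simp only [Pi.zero_apply] at this
      ext
      omega) hξ0
    refine ⟨n, fun _ => σ0, fun _ => 0, fun _ => hHpos, ?_⟩
    have e : ∀ l : ι → Fin L, ent b q L H (fun _ => 0) l =
        q ^ (Fintype.card ι * (Fintype.card ι * (L * H))) := by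
      intro l
      simp only [ent, mul_zero, pow_zero, one_mul, Nat.sub_zero, Finset.prod_const,
        Finset.card_univ, ← pow_mul]
      congr 1; ring
    simp only [hZ, e]
    simp_rw [← mul_assoc, ← Finset.sum_mul]
    refine mul_ne_zero ?_ (pow_ne_zero _ hq)
    simpa using hn
  set τ := Nat.find hex with hτ
  obtain ⟨s, h, hh, hZne⟩ := Nat.find_spec hex
  have hmin : ∀ n < τ, ∀ (s : Fin n → S) (h : ι → ℕ), (∀ j, h j < H) → Z n s h = 0 := by
    intro n hn s h hh
    have := Nat.find_min hex hn
    push Not at this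
    exact this s h hh
  have hτT : τ ≥ T := by
    by_contra hlt
    push Not at hlt
    exact hZne (hZsmall _ hlt s h hh)
  refine ⟨τ, hτT, fun R hR => ?_⟩
  -- translate to analytic functions
  set θ : 𝓞 F →+* ℂ := ψ.comp (algebraMap (𝓞 F) F) with hθ
  set Q : ℂ := θ q ^ (Fintype.card ι * (Fintype.card ι * (L * H))) with hQ
  have hθq : θ q ≠ 0 := by
    simp only [hθ, RingHom.comp_apply]
    rw [Ne, map_eq_zero ψ]
    simpa using hq
  have hQne : Q ≠ 0 := pow_ne_zero _ hθq
  set Y : ι → (ι → Fin L) → ℂ := fun j l => ∑ i, ((l i : ℕ) : ℂ) * Φ i j with hY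
  set X : S → (ι → Fin L) → ℂ := fun σ l => θ (xh x σ l) with hX
  have hZθ : ∀ n (s : Fin n → S) (h : ι → ℕ), (∀ j, h j < H) → θ (Z n s h) =
      Q * ∑ l, (θ (ξ l) * Complex.exp (∑ j, (h j : ℂ) * Y j l)) * ∏ k, X (s k) l := by
    intro n s h hh
    rw [hZ, map_sum, Finset.mul_sum]
    refine Finset.sum_congr rfl fun l _ => ?_
    rw [map_mul, map_mul, ent_val θ b q Φ hb L H h hh l, map_prod]
    ring
  have hYX : ∀ j l, Y j l = ∑ σ, v σ j * X σ l := by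
    intro j l
    simp only [hY, hX, xh_val, Finset.mul_sum]
    rw [Finset.sum_comm]
    refine Finset.sum_congr rfl fun i _ => ?_
    rw [hv, Finset.mul_sum]
    refine Finset.sum_congr rfl fun σ _ => ?_
    simp only [hθ, RingHom.comp_apply]
    ring
  have hXY : ∀ σ l, X σ l = ∑ j, c σ j * Y j l := by
    intro σ l
    simp only [hY, hX, xh_val, Finset.mul_sum]
    rw [Finset.sum_comm]
    refine Finset.sum_congr rfl fun i _ => ?_
    simp only [hθ, RingHom.comp_apply]
    rw [hc, Finset.mul_sum]
    refine Finset.sum_congr rfl fun j _ => ?_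
    ring
  have hYB : ∀ j l, ‖Y j l‖ ≤ A * L := by
    intro j l
    have hdpos : (0 : ℝ) < Fintype.card ι := by exact_mod_cast Fintype.card_pos
    refine (norm_sum_le _ _).trans ?_
    calc _ ≤ ∑ i : ι, (L * (A / Fintype.card ι)) := by
          apply Finset.sum_le_sum
          intro i _
          rw [norm_mul, Complex.norm_natCast]
          have h1 : ((l i : ℕ) : ℝ) ≤ L := by exact_mod_cast (l i).2.le
          have h2 : ‖Φ i j‖ ≤ A / Fintype.card ι := by
            rw [le_div_iff₀ hdpos, mul_comm]; exact hΦA i j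
          gcongr
      _ = _ := by
        rw [Finset.sum_const, nsmul_eq_mul, Finset.card_univ]; field_simp
  have hP0 : 0 ≤ P := by rw [hP]; positivity
  have hbd := analytic_bound (fun l => θ (ξ l)) X Y v c hYX hXY H H1 τ (by rw [hH, hd]) P (A * L) A R
    (fun l => hξP ψ l) hAL hYB (by linarith) hcA hR hP0 (by
      intro n hn s h hh
      have h1 := hmin n hn s h hh
      have h2 := hZθ n s h hh
      rw [h1, map_zero] at h2
      exact (mul_eq_zero.1 h2.symm).resolve_left hQne) s h hh
  rw [hcardL, ← hd] at hbd
  push_cast at hbd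
  refine one_le_of_ne_zero ψ (Z τ s h) hZne _ _ ?_ ?_
  · have e : ψ (algebraMap (𝓞 F) F (Z τ s h)) = θ (Z τ s h) := rfl
    rw [e, hZθ τ s h hh, norm_mul]
    have hQA : ‖Q‖ ≤ A ^ (L * H) := by
      have hC0 : 0 ≤ C := (norm_nonneg _).trans (hqC ψ)
      rw [hQ, norm_pow]
      calc _ ≤ C ^ (Fintype.card ι * (Fintype.card ι * (L * H))) := by
            gcongr
            exact hqC ψ
        _ = (C ^ (Fintype.card ι * Fintype.card ι)) ^ (L * H) := by
            rw [← pow_mul]; congr 1; ring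
        _ ≤ _ := by gcongr
    gcongr
  · intro φ
    simp only [hZ, map_sum]
    refine (norm_sum_le _ _).trans ?_
    have : ((L : ℝ) ^ d) = ((Finset.univ : Finset (ι → Fin L)).card : ℝ) := by
      rw [Finset.card_univ, hcardL]; push_cast; rfl
    rw [this, ← nsmul_eq_mul]
    apply Finset.sum_le_card_nsmul
    intro l _
    rw [map_mul, map_mul, map_mul, map_mul, norm_mul, norm_mul]
    gcongr
    · exact hξP φ l
    · rw [map_prod, map_prod, norm_prod]
      calc _ ≤ ∏ k : Fin τ, (A * L) :=
            Finset.prod_le_prod (fun _ _ => norm_nonneg _) (fun k _ => xhB φ _ l)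
        _ = _ := by simp
    · exact entB φ h hh l

end BakerProof


namespace BakerProof

open NumberField

theorem numeric (d D G H1 H N L T τ : ℕ) (A c1 P R : ℝ) (hd : 1 ≤ d)
    (hA1 : 1 ≤ A) (hc1 : 1 ≤ c1)
    (hG : G = (2 * d + 11) + (2 * d + 7) * D + 1) (hH1 : H1 = 2 * d * G) (hH : H = d * H1)
    (hL : L = 2 * H * N ^ (d - 1)) (hT : T = N ^ d) (hτ : T ≤ τ)
    (hN2 : 2 ≤ N) (hN8 : 8 * H ^ 2 ≤ N) (hNd : d ≤ N) (hNA : A ≤ N) (hNc : c1 ^ 2 ≤ N)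
    (hNe : Real.exp (A * (d + 1)) ≤ N) (hNH : (4 * H ^ 2) ^ (2 * d) ≤ N)
    (hP : P = c1 ^ 2 * (L : ℝ) ^ d * ((A * L) ^ (d * T) * A ^ (L * H)))
    (hR : R = τ / L) (hfin : 2 * (H : ℝ) + 2 ≤ R →
      1 ≤ (A ^ (L * H) * ((d * A) ^ τ * (τ.factorial * ((2 * H / R) ^ (H1 * τ) *
        ((L : ℝ) ^ d * (P * (A * L) ^ τ * Real.exp ((A * L) * (d * H + R)))))))) *
        ((L : ℝ) ^ d * (P * ((A * L) ^ τ * A ^ (L * H)))) ^ D) : False := by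
  have hGpos : 1 ≤ G := by omega
  have hH1pos : 1 ≤ H1 := by rw [hH1]; exact Nat.mul_pos (by omega) hGpos
  have hHpos : 1 ≤ H := by rw [hH]; exact Nat.mul_pos hd hH1pos
  have hNT : N ≤ T := by rw [hT]; exact Nat.le_self_pow (by omega) N
  have hNτ : N ≤ τ := hNT.trans hτ
  have hTN : T = N * N ^ (d - 1) := by
    rw [hT, ← pow_succ']; congr 1; omega
  have hLpos : 1 ≤ L := by rw [hL]; exact Nat.mul_pos (by omega) (Nat.pow_pos (by omega))
  have h4 : L * (2 * H + 2) ≤ τ := by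
    refine le_trans ?_ hτ
    rw [hTN, hL]
    calc 2 * H * N ^ (d - 1) * (2 * H + 2) ≤ 2 * H * N ^ (d - 1) * (4 * H) := by
          gcongr; omega
      _ = 8 * H ^ 2 * N ^ (d - 1) := by ring
      _ ≤ _ := by gcongr
  have hLH : L * H ≤ τ := le_trans (Nat.mul_le_mul_left _ (by omega)) h4
  have hLτ : L ≤ τ := le_trans (Nat.le_mul_of_pos_right _ (by omega)) h4
  have hdτ : d ≤ τ := hNd.trans hNτ
  set t : ℝ := (τ : ℝ) with ht
  have ht2 : 2 ≤ t := by rw [ht]; exact_mod_cast hN2.trans hNτ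
  have ht1 : 1 ≤ t := by linarith
  have ht0 : 0 < t := by linarith
  have hNt : (N : ℝ) ≤ t := by rw [ht]; exact_mod_cast hNτ
  have hAt : A ≤ t := hNA.trans hNt
  have hct : c1 ^ 2 ≤ t := hNc.trans hNt
  have het : Real.exp (A * (d + 1)) ≤ t := hNe.trans hNt
  have hLt : (L : ℝ) ≤ t := by rw [ht]; exact_mod_cast hLτ
  have hLHt : (L : ℝ) * H ≤ t := by rw [ht]; exact_mod_cast hLH
  have hdt : (d : ℝ) ≤ t := by rw [ht]; exact_mod_cast hdτ
  have hL1 : (1 : ℝ) ≤ L := by exact_mod_cast hLpos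
  have hA0 : 0 ≤ A := by linarith
  have hL0 : (0 : ℝ) ≤ L := by linarith
  have hτ1 : 1 ≤ τ := by omega
  have b1 : c1 ^ 2 ≤ t ^ τ := hct.trans (le_self_pow₀ ht1 (by omega))
  have b2 : (L : ℝ) ^ d ≤ t ^ τ :=
    (pow_le_pow_left₀ hL0 hLt d).trans (pow_le_pow_right₀ ht1 hdτ)
  have hAL : A * L ≤ t ^ 2 := by
    rw [sq]; gcongr
  have b3 : (A * L) ^ (d * T) ≤ t ^ (2 * d * τ) := by
    calc (A * L) ^ (d * T) ≤ (t ^ 2) ^ (d * T) := by gcongr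
      _ = t ^ (2 * (d * T)) := by rw [← pow_mul]
      _ ≤ t ^ (2 * d * τ) := by
          apply pow_le_pow_right₀ ht1
          rw [mul_assoc]; gcongr
  have b4 : A ^ (L * H) ≤ t ^ τ :=
    (pow_le_pow_left₀ hA0 hAt _).trans (pow_le_pow_right₀ ht1 hLH)
  have b5 : (A * L) ^ τ ≤ t ^ (2 * τ) := by
    rw [pow_mul]; gcongr
  have b6 : (d * A) ^ τ ≤ t ^ (2 * τ) := by
    rw [pow_mul, sq]; gcongr
  have b7 : (τ.factorial : ℝ) ≤ t ^ τ := by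
    rw [ht]; exact_mod_cast Nat.factorial_le_pow τ
  have hRL : R * L = t := by rw [hR]; field_simp
  have b8 : Real.exp ((A * L) * (d * H + R)) ≤ t ^ τ := by
    have e1 : (A * L) * (d * H + R) ≤ τ * (A * (d + 1)) := by
      calc (A * L) * (d * H + R) = A * (d * (L * H) + R * L) := by ring
        _ ≤ A * (d * t + t) := by rw [hRL]; gcongr
        _ = _ := by rw [← ht]; ring
    calc _ ≤ Real.exp (τ * (A * (d + 1))) := Real.exp_le_exp.2 e1
      _ = Real.exp (A * (d + 1)) ^ τ := Real.exp_nat_mul _ _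
      _ ≤ _ := by gcongr
  have hP0 : 0 ≤ P := by rw [hP]; positivity
  have hPt : P ≤ t ^ ((2 * d + 3) * τ) := by
    rw [hP]
    calc _ ≤ t ^ τ * t ^ τ * (t ^ (2 * d * τ) * t ^ τ) := by gcongr
      _ = _ := by ring
  have hV : (L : ℝ) ^ d * (P * ((A * L) ^ τ * A ^ (L * H))) ≤ t ^ ((2 * d + 7) * τ) := by
    calc _ ≤ t ^ τ * (t ^ ((2 * d + 3) * τ) * (t ^ (2 * τ) * t ^ τ)) := by gcongr
      _ = _ := by ring
  have hRpos : 0 < R := by rw [hR]; positivity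
  -- the gain
  set Qq : ℝ := 2 * H / R with hQq
  have hQ0 : 0 ≤ Qq := by positivity
  have hQd : Qq ^ (2 * d) ≤ 1 / t := by
    have e1 : Qq = 2 * H * L / t := by
      rw [hQq, hR]; field_simp
    have e2 : (L : ℝ) ^ d * t ≤ (2 * H) ^ d * t ^ d := by
      have : L ^ d * τ ≤ (2 * H) ^ d * τ ^ d := by
        rw [hL, mul_pow, mul_assoc]
        gcongr
        have : (N ^ (d - 1)) ^ d = T ^ (d - 1) := by
          rw [hT, ← pow_mul, ← pow_mul, mul_comm]
        rw [this]
        calc T ^ (d - 1) * τ ≤ τ ^ (d - 1) * τ := by gcongr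
          _ = τ ^ d := by rw [← pow_succ]; congr 1; omega
      rw [ht]; exact_mod_cast this
    have e3 : Qq ^ d ≤ (4 * H ^ 2) ^ d / t := by
      rw [e1, div_pow, div_le_div_iff₀ (by positivity) ht0]
      calc (2 * (H : ℝ) * L) ^ d * t = (2 * H) ^ d * (L ^ d * t) := by rw [mul_pow]; ring
        _ ≤ (2 * H) ^ d * ((2 * H) ^ d * t ^ d) := by gcongr
        _ = ((2 * H) * (2 * H)) ^ d * t ^ d := by rw [mul_pow (2 * (H : ℝ)) (2 * H)]; ring
        _ = _ := by ring
    have e4 : (4 * (H : ℝ) ^ 2) ^ (2 * d) ≤ t := by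
      refine le_trans ?_ hNt
      exact_mod_cast hNH
    calc Qq ^ (2 * d) = (Qq ^ d) ^ 2 := by rw [mul_comm, pow_mul]
      _ ≤ ((4 * H ^ 2) ^ d / t) ^ 2 := by gcongr
      _ = (4 * H ^ 2) ^ (2 * d) / t ^ 2 := by rw [div_pow, ← pow_mul, mul_comm d 2]
      _ ≤ t / t ^ 2 := by gcongr
      _ = 1 / t := by field_simp
  have hQt : Qq ^ (H1 * τ) ≤ (1 / t) ^ (G * τ) := by
    calc Qq ^ (H1 * τ) = (Qq ^ (2 * d)) ^ (G * τ) := by rw [← pow_mul, hH1]; congr 1; ring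
      _ ≤ _ := by gcongr
  have hU : (A ^ (L * H) * ((d * A) ^ τ * (τ.factorial * (Qq ^ (H1 * τ) *
        ((L : ℝ) ^ d * (P * (A * L) ^ τ * Real.exp ((A * L) * (d * H + R)))))))) ≤
        (1 / t) ^ (G * τ) * t ^ ((2 * d + 11) * τ) := by
    calc _ ≤ t ^ τ * (t ^ (2 * τ) * (t ^ τ * ((1 / t) ^ (G * τ) *
          (t ^ τ * (t ^ ((2 * d + 3) * τ) * t ^ (2 * τ) * t ^ τ))))) := by gcongr
      _ = (1 / t) ^ (G * τ) * t ^ (τ + (2 * τ + (τ + (τ + ((2 * d + 3) * τ + 2 * τ + τ))))) := by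
          simp only [pow_add]; ring
      _ = (1 / t) ^ (G * τ) * t ^ ((2 * d + 11) * τ) := by
          congr 2; ring
  have h1 := hfin (by
    rw [hR, le_div_iff₀ (by linarith), mul_comm, ht]
    exact_mod_cast h4)
  have h2 : (1 : ℝ) ≤ (1 / t) ^ (G * τ) * t ^ ((2 * d + 11) * τ) * (t ^ ((2 * d + 7) * τ)) ^ D := by
    refine h1.trans ?_
    gcongr
  have h3 : (1 / t) ^ (G * τ) * t ^ ((2 * d + 11) * τ) * (t ^ ((2 * d + 7) * τ)) ^ D
      = (1 / t) ^ τ := by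
    have : t ^ (G * τ) = t ^ ((2 * d + 11) * τ) * (t ^ ((2 * d + 7) * τ)) ^ D * t ^ τ := by
      rw [← pow_mul, ← pow_add, ← pow_add, hG]; congr 1; ring
    rw [one_div, inv_pow, inv_pow, this]
    field_simp
  rw [h3] at h2
  have h5 : (1 / t) ^ τ < 1 := by
    apply pow_lt_one₀ (by positivity) _ (by omega)
    rw [div_lt_one ht0]; linarith
  linarith

theorem core (F : Type) [Field F] [NumberField F] (ψ : F →+* ℂ)
    {S ι : Type} [Fintype S] [Fintype ι] (hcard : Fintype.card S < Fintype.card ι)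
    (x : S → ι → 𝓞 F) (a : ι → ι → F) (Φ : ι → ι → ℂ) (v c : S → ι → ℂ)
    (ha : ∀ i j, ψ (a i j) = Complex.exp (Φ i j))
    (hv : ∀ i j, Φ i j = ∑ σ, v σ j * ψ (algebraMap (𝓞 F) F (x σ i)))
    (hc : ∀ σ i, ψ (algebraMap (𝓞 F) F (x σ i)) = ∑ j, c σ j * Φ i j)
    (σ0 : S) (hinj : ∀ μ : ι → ℤ, ∑ i, (μ i : 𝓞 F) * x σ0 i = 0 → μ = 0) : False := by
  classical
  obtain ⟨q, hq⟩ := IsLocalization.exist_integer_multiples_of_finite (nonZeroDivisors (𝓞 F))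
    (fun r : ι × ι => a r.1 r.2)
  choose b hb using hq
  have hq0 : (q : 𝓞 F) ≠ 0 := nonZeroDivisors.coe_ne_zero q
  obtain ⟨c1, hc1, hsieg⟩ := siegel F
  set d := Fintype.card ι with hd
  have hd1 : 1 ≤ d := by omega
  obtain ⟨C, hC1, hC⟩ : ∃ C : ℝ, 1 ≤ C ∧ (∀ r : ι × ι, house (algebraMap (𝓞 F) F (b r)) ≤ C) ∧
      house (algebraMap (𝓞 F) F q) ≤ C ∧
      (∀ r : S × ι, house (algebraMap (𝓞 F) F (x r.1 r.2)) ≤ C) ∧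
      (∀ r : ι × ι, ‖Φ r.1 r.2‖ ≤ C) ∧ (∀ r : S × ι, ‖c r.1 r.2‖ ≤ C) := by
    have key : ∀ (κ : Type) [Finite κ] (f : κ → ℝ), ∃ C, ∀ k, f k ≤ C := by
      intro κ _ f
      obtain ⟨C, hC⟩ := (Set.finite_range f).bddAbove
      exact ⟨C, fun k => hC ⟨k, rfl⟩⟩
    obtain ⟨C1, h1⟩ := key _ (fun r : ι × ι => house (algebraMap (𝓞 F) F (b r)))
    obtain ⟨C2, h2⟩ := key _ (fun r : S × ι => house (algebraMap (𝓞 F) F (x r.1 r.2)))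
    obtain ⟨C3, h3⟩ := key _ (fun r : ι × ι => ‖Φ r.1 r.2‖)
    obtain ⟨C4, h4⟩ := key _ (fun r : S × ι => ‖c r.1 r.2‖)
    refine ⟨max 1 (max C1 (max C2 (max C3 (max C4 (house (algebraMap (𝓞 F) F q)))))), ?_, ?_⟩
    · simp
    · refine ⟨fun r => ?_, ?_, fun r => ?_, fun r => ?_, fun r => ?_⟩
      · have := h1 r; simp only [le_max_iff]; tauto
      · simp
      · have := h2 r; simp only [le_max_iff]; tauto
      · have := h3 r; simp only [le_max_iff]; tauto
      · have := h4 r; simp only [le_max_iff]; tauto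
  obtain ⟨hCb, hCq, hCx, hCΦ, hCc⟩ := hC
  have hdR : (1 : ℝ) ≤ d := by exact_mod_cast hd1
  set A : ℝ := d * C * C ^ (d * d) with hA
  have hpow1 : 1 ≤ C ^ (d * d) := one_le_pow₀ hC1
  have hdC : 1 ≤ d * C := one_le_mul_of_one_le_of_one_le hdR hC1
  have hA1 : 1 ≤ A := one_le_mul_of_one_le_of_one_le hdC hpow1
  have hdCA : d * C ≤ A := le_mul_of_one_le_right (by linarith) hpow1
  have hCA : C ≤ A := le_trans (le_mul_of_one_le_left (by linarith) hdR) hdCA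
  have hCpA : C ^ (d * d) ≤ A := le_mul_of_one_le_left (by linarith) hdC
  set D := Module.finrank ℚ F - 1 with hD
  set G := (2 * d + 11) + (2 * d + 7) * D + 1 with hG
  set H1 := 2 * d * G with hH1
  set H := d * H1 with hH
  obtain ⟨N, hN⟩ : ∃ N : ℕ, max (max (2 : ℝ) (8 * H ^ 2)) (max (max (d : ℝ) A)
      (max (c1 ^ 2) (max (Real.exp (A * (d + 1))) ((4 * H ^ 2) ^ (2 * d))))) ≤ N :=
    exists_nat_ge _
  simp only [max_le_iff] at hN
  obtain ⟨⟨hN2, hN8⟩, ⟨hNd, hNA⟩, hNc, hNe, hNH⟩ := hN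
  have hN2' : 2 ≤ N := by exact_mod_cast hN2
  have hH1pos : 1 ≤ H1 := by rw [hH1]; exact Nat.mul_pos (by omega) (by omega)
  obtain ⟨τ, hτ, hfin⟩ := core_param F ψ hcard x (fun i j => b (i, j)) q Φ v c hq0
    (by
      intro i j
      rw [hb (i, j), ← ha]
      rw [Algebra.smul_def, map_mul]) hv hc σ0 hinj A C c1 hA1 hCpA
    (fun i j φ => (norm_embedding_le_house _ φ).trans (hCb (i, j)))
    (fun φ => (norm_embedding_le_house _ φ).trans hCq)
    (fun σ i φ => by
      refine le_trans ?_ hdCA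
      gcongr
      exact (norm_embedding_le_house _ φ).trans (hCx (σ, i)))
    (fun i j => by
      refine le_trans ?_ hdCA
      gcongr
      exact hCΦ (i, j))
    (fun σ j => (hCc (σ, j)).trans hCA) hc1 hsieg d N H1 H (2 * H * N ^ (d - 1)) (N ^ d) hd hH
    hH1pos (by omega) rfl rfl _ rfl
  exact numeric d D G H1 H N _ _ τ A c1 _ _ hd1 hA1 hc1 hG hH1 hH rfl rfl hτ hN2'
    (by exact_mod_cast hN8) (by exact_mod_cast hNd) hNA hNc hNe (by exact_mod_cast hNH) rfl rfl
    (hfin _)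

end BakerProof


namespace BakerProof

open NumberField

/-- Trace as a sum over ring embeddings. -/
theorem trace_sum (K : Type) [Field K] [NumberField K] (y : K) :
    ((Algebra.trace ℚ K y : ℚ) : ℂ) = ∑ σ : K →+* ℂ, σ y := by
  have h := trace_eq_sum_embeddings (K := ℚ) (L := K) ℂ (x := y)
  rw [eq_ratCast] at h
  rw [h]
  exact (Fintype.sum_equiv (RingHom.equivRatAlgHom K ℂ) _ _ (fun σ => rfl)).symm

/-- `exp (q ℓ)` is algebraic as soon as `exp ℓ` is. -/
theorem exp_rat_algebraic (l : ℂ) (hl : IsAlgebraic ℚ (Complex.exp l)) (q : ℚ) :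
    IsAlgebraic ℚ (Complex.exp ((q : ℂ) * l)) := by
  have hden : 0 < q.den := q.den_pos
  refine IsAlgebraic.of_pow hden ?_
  rw [← Complex.exp_nat_mul]
  have : ((q.den : ℕ) : ℂ) * ((q : ℂ) * l) = (q.num : ℂ) * l := by
    rw [← mul_assoc]; congr 1
    have := Rat.den_mul_eq_num q
    exact_mod_cast this
  rw [this, Complex.exp_int_mul]
  rcases q.num with m | m
  · simpa using hl.pow m
  · rw [zpow_negSucc]; exact (hl.pow _).inv

theorem exp_sum_algebraic {J : Type} [Fintype J] (l : J → ℂ)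
    (hl : ∀ j, IsAlgebraic ℚ (Complex.exp (l j))) (q : J → ℚ) :
    IsAlgebraic ℚ (Complex.exp (∑ j, (q j : ℂ) * l j)) := by
  rw [Complex.exp_sum]
  have : ∀ s : Finset J, IsAlgebraic ℚ (∏ j ∈ s, Complex.exp ((q j : ℂ) * l j)) := by
    classical
    intro s
    induction s using Finset.induction_on with
    | empty => simpa using isAlgebraic_one
    | insert a s ha ih =>
      rw [Finset.prod_insert ha]
      exact (exp_rat_algebraic _ (hl a) _).mul ih
  exact this _

theorem baker_field (K : Type) [Field K] [NumberField K] (φ : K →+* ℂ)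
    {J : Type} [Fintype J] (β : J → K) (l : J → ℂ) (hli : LinearIndependent ℚ l)
    (hl : ∀ j, IsAlgebraic ℚ (Complex.exp (l j)))
    (hrel : ∑ j, φ (β j) * l j = 0) : β = 0 := by
  classical
  by_contra hβ
  obtain ⟨j0, hj0⟩ : ∃ j, β j ≠ 0 := by
    by_contra h
    push Not at h
    exact hβ (funext h)
  set w : (K →+* ℂ) → ℂ := fun σ => ∑ j, σ (β j) * l j with hw
  have htr : ∀ y : K, ∑ σ : K →+* ℂ, w σ * σ y =
      ∑ j, ((Algebra.trace ℚ K (y * β j) : ℚ) : ℂ) * l j := by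
    intro y
    simp only [trace_sum, hw, Finset.sum_mul, map_mul]
    rw [Finset.sum_comm]
    refine Finset.sum_congr rfl fun j _ => Finset.sum_congr rfl fun σ _ => by ring
  obtain ⟨σ0, hσ0⟩ : ∃ σ, w σ ≠ 0 := by
    by_contra h
    push Not at h
    have h1 := htr (β j0)⁻¹
    simp only [h, zero_mul, Finset.sum_const_zero] at h1
    have h2 := Fintype.linearIndependent_iff.1 hli
      (fun j => Algebra.trace ℚ K ((β j0)⁻¹ * β j)) (by
        simp only [Rat.smul_def]; exact h1.symm) j0
    simp only [inv_mul_cancel₀ hj0] at h2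
    have h3 : Algebra.trace ℚ K (1 : K) = Module.finrank ℚ K := by
      rw [← map_one (algebraMap ℚ K), Algebra.trace_algebraMap]; simp
    rw [h3] at h2
    have := Module.finrank_pos (R := ℚ) (M := K)
    norm_cast at h2
    omega
  let S := {σ : K →+* ℂ // w σ ≠ 0}
  let ι := Module.Free.ChooseBasisIndex ℤ (𝓞 K)
  let ω : ι → 𝓞 K := RingOfIntegers.basis K
  have hcard : Fintype.card S < Fintype.card ι := by
    have h1 : Fintype.card ι = Fintype.card (K →+* ℂ) := by
      rw [Embeddings.card K ℂ, Module.finrank_eq_card_basis (integralBasis K)]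
    rw [h1]
    refine Fintype.card_subtype_lt (x := φ) ?_
    simpa [hw] using hrel
  have hsumS : ∀ f : (K →+* ℂ) → ℂ, (∀ σ, w σ = 0 → f σ = 0) →
      ∑ σ : S, f σ.1 = ∑ σ, f σ := by
    intro f hf
    rw [← Finset.sum_filter_of_ne (p := fun σ => w σ ≠ 0) (fun σ _ hσ h => hσ (hf σ h))]
    exact (Finset.sum_subtype _ (fun σ => by simp) f).symm
  -- inverse matrix
  have hdual : ∀ σ : K →+* ℂ, ∃ b : ι → ℂ, ∀ σ' : K →+* ℂ,
      ∑ j, b j * σ' (ω j) = if σ' = σ then 1 else 0 := by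
    intro σ
    refine ⟨fun j => (canonicalEmbedding.latticeBasis K).repr (Pi.single σ 1) j, fun σ' => ?_⟩
    have := congrFun ((canonicalEmbedding.latticeBasis K).sum_repr (Pi.single σ 1)) σ'
    rw [Finset.sum_apply, Pi.single_apply] at this
    rw [← this]
    refine Finset.sum_congr rfl fun j _ => ?_
    simp [canonicalEmbedding.latticeBasis_apply, ω, integralBasis_apply]
  choose b hb using hdual
  set Φ : ι → ι → ℂ := fun i j => ∑ σ : K →+* ℂ, w σ * σ ((ω i : K) * (ω j : K)) with hΦ
  have hΦalg : ∀ i j, IsAlgebraic ℚ (Complex.exp (Φ i j)) := by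
    intro i j
    rw [hΦ]; simp only
    rw [htr]
    exact exp_sum_algebraic l hl _
  let s : Set ℂ := Set.range (fun r : ι × ι => Complex.exp (Φ r.1 r.2)) ∪
    Set.range (fun r : S × ι => r.1.1 (ω r.2 : K))
  have hxint : ∀ (σ : S) i, IsIntegral ℤ (σ.1 (ω i : K)) := fun σ i =>
    map_isIntegral_int σ.1 (RingOfIntegers.isIntegral_coe (ω i))
  let F := IntermediateField.adjoin ℚ s
  have hsfin : s.Finite := (Set.finite_range _).union (Set.finite_range _)
  have : Finite s := hsfin
  have : FiniteDimensional ℚ F := by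
    refine IntermediateField.finiteDimensional_adjoin ?_
    rintro y (⟨r, rfl⟩ | ⟨r, rfl⟩)
    · exact (hΦalg _ _).isIntegral
    · exact (hxint r.1 r.2).tower_top
  have : NumberField F := { }
  have hF : ∀ y ∈ s, y ∈ F := fun y hy => IntermediateField.subset_adjoin ℚ s hy
  let x : S → ι → 𝓞 F := fun σ i => ⟨⟨σ.1 (ω i : K), hF _ (Or.inr ⟨(σ, i), rfl⟩)⟩, by
    have := hxint σ i
    exact (isIntegral_algHom_iff ((F.val).restrictScalars ℤ) F.val.injective).1 this⟩
  refine core F (algebraMap F ℂ) (S := S) (ι := ι) hcard x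
    (fun i j => ⟨Complex.exp (Φ i j), hF _ (Or.inl ⟨(i, j), rfl⟩)⟩) Φ
    (fun σ j => w σ.1 * σ.1 (ω j : K)) (fun σ j => b σ.1 j / w σ.1) ?_ ?_ ?_ ⟨σ0, hσ0⟩ ?_
  · intro i j; rfl
  · intro i j
    have : ∀ σ : S, algebraMap F ℂ (algebraMap (𝓞 F) F (x σ i)) = σ.1 (ω i : K) := fun σ => rfl
    simp only [this]
    rw [hsumS (fun σ => w σ * σ (ω j : K) * σ (ω i : K))]
    · rw [hΦ]; refine Finset.sum_congr rfl fun σ _ => ?_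
      rw [map_mul]; ring
    · intro σ hσ; simp [hσ]
  · intro σ i
    change σ.1 (ω i : K) = _
    have : ∀ j, b σ.1 j / w σ.1 * Φ i j =
        ∑ σ' : K →+* ℂ, w σ' / w σ.1 * σ' (ω i : K) * (b σ.1 j * σ' (ω j : K)) := by
      intro j
      rw [hΦ]; simp only [Finset.mul_sum, map_mul]
      refine Finset.sum_congr rfl fun σ' _ => by ring
    simp only [this]
    rw [Finset.sum_comm]
    simp only [← Finset.mul_sum, hb]
    simp [div_self σ.2]
  · intro μ hμ
    have h1 := congrArg (fun z : 𝓞 F => algebraMap F ℂ (algebraMap (𝓞 F) F z)) hμ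
    simp only [map_sum, map_mul, map_intCast, map_zero] at h1
    have h2 : σ0 (∑ i, (μ i : K) * (ω i : K)) = 0 := by
      rw [map_sum, ← h1]
      refine Finset.sum_congr rfl fun i _ => ?_
      rw [map_mul, map_intCast]; rfl
    have h3 := (map_eq_zero σ0).1 h2
    have h4 : ∑ i, μ i • ω i = 0 := by
      apply RingOfIntegers.coe_injective
      simpa using h3
    exact funext (Fintype.linearIndependent_iff.1 (RingOfIntegers.basis K).linearIndependent μ h4)

/-- Baker's theorem, homogeneous form. -/
theorem baker {J : Type} [Fintype J] (l : J → ℂ) (hli : LinearIndependent ℚ l)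
    (hl : ∀ j, IsAlgebraic ℚ (Complex.exp (l j))) :
    LinearIndependent (algebraicClosure ℚ ℂ) l := by
  rw [Fintype.linearIndependent_iff]
  intro g hg
  let s : Set ℂ := Set.range (fun j => (g j : ℂ))
  let K := IntermediateField.adjoin ℚ s
  have : Finite s := Set.finite_range _
  have : FiniteDimensional ℚ K := by
    refine IntermediateField.finiteDimensional_adjoin ?_
    rintro y ⟨r, rfl⟩
    exact (mem_algebraicClosure_iff.1 (g r).2).isIntegral
  have : NumberField K := { }
  have := baker_field K (algebraMap K ℂ)
    (fun j => ⟨g j, IntermediateField.subset_adjoin ℚ s ⟨j, rfl⟩⟩) l hli hl (by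
      simpa [Algebra.smul_def] using hg)
  intro j
  have h := congrArg (fun z : K => (z : ℂ)) (congrFun this j)
  exact Subtype.ext h

end BakerProof


namespace BakerProof

theorem finrank_qbar (T : Set ℂ) (hT : T.Finite)
    (halg : ∀ t ∈ T, IsAlgebraic ℚ (Complex.exp t)) :
    Module.finrank (algebraicClosure ℚ ℂ) (Submodule.span (algebraicClosure ℚ ℂ) T) =
      Module.finrank ℚ (Submodule.span ℚ T) := by
  obtain ⟨b, hbT, hspan, hli⟩ := exists_linearIndependent ℚ T
  have : Fintype b := (hT.subset hbT).fintype
  have hli2 := baker (fun x : b => (x : ℂ)) hli (fun j => halg _ (hbT j.2))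
  have h2 : Submodule.span (algebraicClosure ℚ ℂ) T =
      Submodule.span (algebraicClosure ℚ ℂ) (Set.range (fun x : b => (x : ℂ))) := by
    rw [Subtype.range_coe]
    refine le_antisymm (Submodule.span_le.2 ?_) (Submodule.span_mono hbT)
    intro t ht
    have h3 : t ∈ Submodule.span ℚ b := hspan ▸ Submodule.subset_span ht
    exact Submodule.span_le_restrictScalars ℚ (algebraicClosure ℚ ℂ) b h3
  have h3 : Submodule.span ℚ T = Submodule.span ℚ (Set.range (fun x : b => (x : ℂ))) := by
    rw [Subtype.range_coe, hspan]
  rw [h2, h3, finrank_span_eq_card hli2, finrank_span_eq_card hli]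

theorem finrank_int (T : Set ℂ) (hT : T.Finite) :
    Module.finrank ℤ (Submodule.span ℤ T) = Module.finrank ℚ (Submodule.span ℚ T) := by
  have : Module.Finite ℤ (Submodule.span ℤ T) := Module.Finite.span_of_finite ℤ hT
  let e := Module.Free.chooseBasis ℤ (Submodule.span ℤ T)
  have hli : LinearIndependent ℤ (fun i => (e i : ℂ)) :=
    e.linearIndependent.map' (Submodule.subtype _) (Submodule.ker_subtype _)
  have hli2 : LinearIndependent ℚ (fun i => (e i : ℂ)) :=
    (LinearIndependent.iff_fractionRing ℤ ℚ).1 hli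
  have h3 : Submodule.span ℚ T = Submodule.span ℚ (Set.range (fun i => (e i : ℂ))) := by
    refine le_antisymm (Submodule.span_le.2 ?_) (Submodule.span_le.2 ?_)
    · intro t ht
      have h := congrArg (Submodule.subtype _) (e.sum_repr ⟨t, Submodule.subset_span ht⟩)
      simp only [map_sum, map_smul, Submodule.subtype_apply] at h
      rw [SetLike.mem_coe, ← h]
      refine Submodule.sum_mem _ fun i _ => ?_
      exact zsmul_mem (Submodule.subset_span (Set.mem_range_self i)) _
    · rintro _ ⟨i, rfl⟩
      exact Submodule.span_le_restrictScalars ℤ ℚ T (e i).2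
  rw [h3, finrank_span_eq_card hli2, Module.finrank_eq_card_basis e]

theorem finrank_tensor (M : Type) [AddCommGroup M] :
    Module.finrank ℚ (ℚ ⊗[ℤ] M) = Module.finrank ℤ M := by
  rw [IsLocalization.finrank_eq ℚ (nonZeroDivisors ℤ) le_rfl]
  have : IsLocalizedModule (nonZeroDivisors ℤ) (TensorProduct.mk ℤ ℚ M 1) :=
    (isLocalizedModule_iff_isBaseChange (nonZeroDivisors ℤ) ℚ _).2
      (TensorProduct.isBaseChange ℤ M ℚ)
  have h2 := @IsLocalizedModule.finrank_eq ℤ M (ℚ ⊗[ℤ] M) _ _ _ _ _ (nonZeroDivisors ℤ)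
    (TensorProduct.mk ℤ ℚ M 1) this le_rfl
  convert h2

theorem exact_count (n : ℕ) (α : Fin n → ℂ) (h0 : ∀ i, α i ≠ 0) :
    Module.finrank ℤ (Submodule.span ℤ (insert (2 * Real.pi * Complex.I)
            (Set.range fun i => Complex.log (α i)))) =
    Module.finrank ℤ (Additive (Subgroup.closure (Set.range fun i => Units.mk0 (α i) (h0 i))))
      + 1 := by
  set T : Set ℂ := insert (2 * Real.pi * Complex.I) (Set.range fun i => Complex.log (α i)) with hTdef
  have hT : T.Finite := (Set.finite_range _).insert _
  set Γ := Subgroup.closure (Set.range fun i => Units.mk0 (α i) (h0 i)) with hΓ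
  have : Module.Finite ℤ (Submodule.span ℤ T) := Module.Finite.span_of_finite ℤ hT
  have hmem : ∀ z ∈ Submodule.span ℤ T, Units.mk0 (Complex.exp z) (Complex.exp_ne_zero z) ∈ Γ := by
    intro z hz
    induction hz using Submodule.span_induction with
    | mem t ht =>
      rcases ht with rfl | ⟨i, rfl⟩
      · convert Γ.one_mem
        ext
        simp [Complex.exp_two_pi_mul_I]
      · refine Subgroup.subset_closure ⟨i, ?_⟩
        ext; simp [Complex.exp_log (h0 i)]
    | zero => 
      convert Γ.one_mem
      ext; simp
    | add x y _ _ hx hy =>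
      convert Γ.mul_mem hx hy
      ext; simp [Complex.exp_add]
    | smul a x _ hx =>
      convert Γ.zpow_mem hx a
      ext; simp [← Complex.exp_int_mul]
  let f0 : Submodule.span ℤ T →+ Additive Γ :=
    { toFun := fun z => Additive.ofMul ⟨Units.mk0 (Complex.exp z) (Complex.exp_ne_zero _),
        hmem z z.2⟩
      map_zero' := by
        apply Additive.toMul.injective; ext; simp
      map_add' := by
        intro x y
        apply Additive.toMul.injective; ext; simp [Complex.exp_add] }
  let f := f0.toIntLinearMap
  have hf : ∀ z, (((f z).toMul : Γ) : ℂˣ) = Units.mk0 (Complex.exp z) (Complex.exp_ne_zero _) :=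
    fun z => rfl
  have hsurj : Function.Surjective f := by
    rintro ⟨g, hg⟩
    suffices h : ∃ z ∈ Submodule.span ℤ T, Complex.exp z = g by
      obtain ⟨z, hz, hzg⟩ := h
      refine ⟨⟨z, hz⟩, ?_⟩
      apply Additive.toMul.injective
      apply Subtype.ext
      apply Units.ext
      exact hzg
    clear_value f
    rw [hΓ] at hg
    induction hg using Subgroup.closure_induction with
    | mem x hx =>
      obtain ⟨i, rfl⟩ := hx
      exact ⟨Complex.log (α i), Submodule.subset_span (Or.inr ⟨i, rfl⟩), by
        simp [Complex.exp_log (h0 i)]⟩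
    | one => exact ⟨0, Submodule.zero_mem _, by simp⟩
    | mul x y _ _ hx hy =>
      obtain ⟨a, ha, ha'⟩ := hx
      obtain ⟨b, hb, hb'⟩ := hy
      exact ⟨a + b, Submodule.add_mem _ ha hb, by simp [Complex.exp_add, ha', hb']⟩
    | inv x _ hx =>
      obtain ⟨a, ha, ha'⟩ := hx
      exact ⟨-a, Submodule.neg_mem _ ha, by simp [Complex.exp_neg, ha']⟩
  have hpi : (2 * Real.pi * Complex.I : ℂ) ∈ Submodule.span ℤ T :=
    Submodule.subset_span (Or.inl rfl)
  have hker : LinearMap.ker f = Submodule.span ℤ {(⟨_, hpi⟩ : Submodule.span ℤ T)} := by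
    ext z
    rw [LinearMap.mem_ker, Submodule.mem_span_singleton]
    have h1 : f z = 0 ↔ Complex.exp z = 1 := by
      constructor
      · intro h
        have := hf z
        rw [h] at this
        have := congrArg Units.val this
        simpa using this.symm
      · intro h
        apply Additive.toMul.injective
        apply Subtype.ext
        apply Units.ext
        exact h
    rw [h1, Complex.exp_eq_one_iff]
    constructor
    · rintro ⟨m, hm⟩
      refine ⟨m, Subtype.ext ?_⟩
      simp [hm]
    · rintro ⟨m, rfl⟩
      exact ⟨m, by simp⟩
  have hne : (⟨_, hpi⟩ : Submodule.span ℤ T) ≠ 0 := by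
    intro h
    exact Complex.two_pi_I_ne_zero (congrArg Subtype.val h)
  have hk1 : Module.finrank ℤ (LinearMap.ker f) = 1 := by
    rw [hker, ← (LinearEquiv.toSpanNonzeroSingleton ℤ _ _ hne).finrank_eq, Module.finrank_self]
  have h := (LinearMap.ker f).finrank_quotient_add_finrank
  rw [(f.quotKerEquivOfSurjective hsurj).finrank_eq, hk1] at h
  exact h.symm

end BakerProof

set_option synthInstance.maxHeartbeats 400000 in

/-- Baker's theorem on linear forms in logarithms, in the reformulation of Huber–Wüstholz:
for nonzero algebraic numbers `α₁, …, αₙ`, the dimension over `ℚ̄` (the algebraic closure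
of `ℚ` in `ℂ`) of the `ℚ̄`-linear span of `2πi, log α₁, …, log αₙ` minus `1` equals the
rank of the multiplicative subgroup of `ℂˣ` generated by `α₁, …, αₙ`, that is, the
`ℚ`-dimension of that group tensored with `ℚ`. -/
theorem baker_dim_span_logs
    (n : ℕ) (α : Fin n → ℂ) (h0 : ∀ i, α i ≠ 0) (halg : ∀ i, IsAlgebraic ℚ (α i)) :
    Module.finrank (algebraicClosure ℚ ℂ)
        (Submodule.span (algebraicClosure ℚ ℂ)
          (insert (2 * Real.pi * Complex.I)
            (Set.range fun i => Complex.log (α i)))) - 1 =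
      Module.finrank ℚ
        (ℚ ⊗[ℤ] Additive (Subgroup.closure (Set.range fun i => Units.mk0 (α i) (h0 i)))) := by
  have hT : (insert (2 * Real.pi * Complex.I : ℂ)
      (Set.range fun i => Complex.log (α i))).Finite := (Set.finite_range _).insert _
  rw [BakerProof.finrank_tensor, BakerProof.finrank_qbar _ hT, ← BakerProof.finrank_int _ hT,
    BakerProof.exact_count n α h0, Nat.add_sub_cancel]
  rintro t (rfl | ⟨i, rfl⟩)
  · rw [Complex.exp_two_pi_mul_I]; exact isAlgebraic_one
  · simp only [Complex.exp_log (h0 i)]; exact halg i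
end
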